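/- For every n ≥ 1, the maximum of the total size ∑_{r ∈ (ℤ/2ℤ)^n} |A(r)| over all families of subsets A(r) ⊆ (ℤ/3ℤ)^n indexed by r ∈ (ℤ/2ℤ)^n satisfying property (*)_5 equals r_5(ℤ_6^n). -/

import Mathlib

/-- `A` contains a `k`-term arithmetic progression `a, a+d, …, a+(k-1)d`
whose terms are pairwise distinct. -/
def IsDistinctAP {G : Type*} [AddCommGroup G] (k : ℕ) (A : Set G) : Prop :=
  ∃ a d : G, (∀ i : Fin k, a + (i : ℕ) • d ∈ A) ∧
    Function.Injective fun i : Fin k => a + (i : ℕ) • d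

/-- `rAP k m n` is the largest cardinality of a subset of `(ℤ/mℤ)^n` containing
no `k`-term arithmetic progression of pairwise distinct elements. -/
noncomputable def rAP (k m n : ℕ) : ℕ :=
  sSup {s : ℕ | ∃ A : Finset (Fin n → ZMod m),
    ¬ IsDistinctAP k (A : Set (Fin n → ZMod m)) ∧ A.card = s}

theorem star5_key {G : Type*} [AddCommGroup G] (n : ℕ)
    (e : G ≃+ (Fin n → ZMod 2) × (Fin n → ZMod 3)) (B : Set G) :
    IsDistinctAP 5 B ↔ ∃ (r' r'' : Fin n → ZMod 2) (a b c : Fin n → ZMod 3), r' ≠ r'' ∧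
        a + c = b + b ∧ a ≠ b ∧ a ≠ c ∧ b ≠ c ∧
        e.symm (r', a) ∈ B ∧ e.symm (r', b) ∈ B ∧ e.symm (r', c) ∈ B ∧
        e.symm (r'', a) ∈ B ∧ e.symm (r'', b) ∈ B := by
  constructor
  · rintro ⟨a, d, hm, hinj⟩
    obtain ⟨⟨x, y⟩, rfl⟩ := e.symm.surjective a
    obtain ⟨⟨u, v⟩, rfl⟩ := e.symm.surjective d
    have hm' : ∀ i : Fin 5, e.symm (x + (i : ℕ) • u, y + (i : ℕ) • v) ∈ B := by
      intro i
      have := hm i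
      rwa [← map_nsmul, ← map_add] at this
    have h2 : ∀ u : Fin n → ZMod 2, 2 • u = 0 := by
      intro u; funext k
      have : ∀ z : ZMod 2, 2 • z = 0 := by decide
      exact this _
    have h3 : ∀ u : Fin n → ZMod 3, 3 • u = 0 := by
      intro u; funext k
      have : ∀ z : ZMod 3, 3 • z = 0 := by decide
      exact this _
    have hu : u ≠ 0 := by
      rintro rfl
      have : (0 : Fin 5) = 3 := hinj (by
        change _ + (0 : ℕ) • e.symm (0, v) = _ + (3 : ℕ) • e.symm (0, v)
        rw [← map_nsmul, ← map_nsmul, Prod.smul_mk, Prod.smul_mk, h3]; simp)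
      exact absurd this (by decide)
    have hv : v ≠ 0 := by
      rintro rfl
      have : (0 : Fin 5) = 2 := hinj (by
        change _ + (0 : ℕ) • e.symm (u, 0) = _ + (2 : ℕ) • e.symm (u, 0)
        rw [← map_nsmul, ← map_nsmul, Prod.smul_mk, Prod.smul_mk, h2]; simp)
      exact absurd this (by decide)
    have h2v : v + v ≠ 0 := by
      intro h
      apply hv
      have := h3 v
      rwa [succ_nsmul, two_nsmul, h, zero_add] at this
    have m0 := hm' 0
    have m1 := hm' 1
    have m2 := hm' 2
    have m3 := hm' 3
    have m4 := hm' 4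
    change e.symm (x + 0 • u, y + 0 • v) ∈ B at m0
    change e.symm (x + 1 • u, y + 1 • v) ∈ B at m1
    change e.symm (x + 2 • u, y + 2 • v) ∈ B at m2
    change e.symm (x + 3 • u, y + 3 • v) ∈ B at m3
    change e.symm (x + 4 • u, y + 4 • v) ∈ B at m4
    have e3 : 3 • u = u := by rw [succ_nsmul, h2, zero_add]
    have e4 : 4 • u = 0 := by rw [succ_nsmul, e3, ← two_nsmul, h2]
    have f4 : 4 • v = v := by rw [succ_nsmul, h3, zero_add]
    rw [zero_nsmul, zero_nsmul, add_zero, add_zero] at m0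
    rw [one_nsmul, one_nsmul] at m1
    rw [h2, add_zero, two_nsmul] at m2
    rw [e3, h3, add_zero] at m3
    rw [e4, f4, add_zero] at m4
    refine ⟨x, x + u, y, y + v, y + (v + v), ?_, by abel, ?_, ?_, ?_, m0, m4, m2, m3, m1⟩
    · simpa using hu
    · simpa using hv
    · simpa using h2v
    · simpa using hv
  · rintro ⟨r, s, a, b, c, hrs, hac, hab, -, -, ma, mb, mc, na, nb⟩
    have hc : c = b + b - a := by rw [← hac]; abel
    subst hc
    refine ⟨e.symm (r, a), e.symm (s - r, b - a), ?_, ?_⟩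
    · intro i
      rw [← map_nsmul, ← map_add, Prod.smul_mk, Prod.mk_add_mk]
      have key : ∀ (p : Fin n → ZMod 2) (q : Fin n → ZMod 3), e.symm (p, q) ∈ B →
          (∀ k, r k + (i : ℕ) • (s k - r k) = p k) → (∀ k, a k + (i : ℕ) • (b k - a k) = q k) →
          e.symm (r + (i : ℕ) • (s - r), a + (i : ℕ) • (b - a)) ∈ B := by
        intro p q h hp hq
        rwa [show r + (i : ℕ) • (s - r) = p from funext hp,
          show a + (i : ℕ) • (b - a) = q from funext hq]
      have g2 : ∀ x y : ZMod 2, x + 0 • (y - x) = x ∧ x + 1 • (y - x) = y ∧ x + 2 • (y - x) = x ∧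
          x + 3 • (y - x) = y ∧ x + 4 • (y - x) = x := by decide
      have g3 : ∀ x y : ZMod 3, x + 0 • (y - x) = x ∧ x + 1 • (y - x) = y ∧
          x + 2 • (y - x) = y + y - x ∧
          x + 3 • (y - x) = x ∧ x + 4 • (y - x) = y := by decide
      fin_cases i
      · exact key _ _ ma (fun k => (g2 _ _).1) (fun k => (g3 _ _).1)
      · exact key _ _ nb (fun k => (g2 _ _).2.1) (fun k => (g3 _ _).2.1)
      · exact key _ _ mc (fun k => (g2 _ _).2.2.1) (fun k => (g3 _ _).2.2.1)
      · exact key _ _ na (fun k => (g2 _ _).2.2.2.1) (fun k => (g3 _ _).2.2.2.1)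
      · exact key _ _ mb (fun k => (g2 _ _).2.2.2.2) (fun k => (g3 _ _).2.2.2.2)
    · intro i j hij
      have hij : (i : ℕ) • e.symm (s - r, b - a) = (j : ℕ) • e.symm (s - r, b - a) :=
        add_left_cancel hij
      rw [← map_nsmul, ← map_nsmul] at hij
      have hij := e.symm.injective hij
      rw [Prod.smul_mk, Prod.smul_mk, Prod.mk.injEq] at hij
      obtain ⟨k, hk⟩ := Function.ne_iff.1 hrs
      obtain ⟨l, hl⟩ := Function.ne_iff.1 hab
      have g2 : ∀ i j : Fin 5, ∀ x y : ZMod 2, x ≠ y → (i : ℕ) • (y - x) = (j : ℕ) • (y - x) →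
          (i : ℕ) % 2 = (j : ℕ) % 2 := by decide
      have g3 : ∀ i j : Fin 5, ∀ x y : ZMod 3, x ≠ y → (i : ℕ) • (y - x) = (j : ℕ) • (y - x) →
          (i : ℕ) % 3 = (j : ℕ) % 3 := by decide
      have t2 := g2 i j _ _ hk (congrFun hij.1 k)
      have t3 := g3 i j _ _ hl (congrFun hij.2 l)
      omega

theorem star5_equiv (n : ℕ) :
    Nonempty ((Fin n → ZMod 6) ≃+ (Fin n → ZMod 2) × (Fin n → ZMod 3)) := by
  let f : ZMod 6 ≃+* ZMod 2 × ZMod 3 := ZMod.chineseRemainder (m := 2) (n := 3) (by decide)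
  refine ⟨{ toFun := fun x => (fun k => (f (x k)).1, fun k => (f (x k)).2)
            invFun := fun p k => f.symm (p.1 k, p.2 k)
            left_inv := fun x => by funext k; simp
            right_inv := fun p => by ext k <;> simp
            map_add' := fun x y => by ext k <;> simp }⟩

theorem star5_sum {G α β : Type*} [Fintype α] [Fintype β]
    (e : G ≃ α × β) (B : Finset G) (A : α → Finset β)
    (h : ∀ r y, y ∈ A r ↔ e.symm (r, y) ∈ B) : B.card = ∑ r, (A r).card := by
  rw [← Finset.card_sigma]
  refine Finset.card_bij' (fun g _ => ⟨(e g).1, (e g).2⟩) (fun p _ => e.symm (p.1, p.2)) ?_ ?_ ?_ ?_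
  · intro g hg
    simp [h, hg]
  · rintro ⟨r, y⟩ hp
    simpa [h] using hp
  · intro g hg
    simp
  · rintro ⟨r, y⟩ hp
    simp

theorem subset_reformulation_star5 (n : ℕ) (hn : 1 ≤ n) :
    IsGreatest {S : ℕ | ∃ A : (Fin n → ZMod 2) → Finset (Fin n → ZMod 3),
      (¬ ∃ (r' r'' : Fin n → ZMod 2) (a b c : Fin n → ZMod 3), r' ≠ r'' ∧
        a + c = b + b ∧ a ≠ b ∧ a ≠ c ∧ b ≠ c ∧
        a ∈ A r' ∧ b ∈ A r' ∧ c ∈ A r' ∧ a ∈ A r'' ∧ b ∈ A r'') ∧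
      S = ∑ r : Fin n → ZMod 2, (A r).card}
    (rAP 5 6 n) := by
  classical
  obtain ⟨e⟩ := star5_equiv n
  have hbdd : BddAbove {s : ℕ | ∃ A : Finset (Fin n → ZMod 6),
      ¬ IsDistinctAP 5 (A : Set (Fin n → ZMod 6)) ∧ A.card = s} := by
    refine ⟨Fintype.card (Fin n → ZMod 6), ?_⟩
    rintro s ⟨A, -, rfl⟩
    exact Finset.card_le_univ A
  constructor
  · have hmem : rAP 5 6 n ∈ {s : ℕ | ∃ A : Finset (Fin n → ZMod 6),
        ¬ IsDistinctAP 5 (A : Set (Fin n → ZMod 6)) ∧ A.card = s} := by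
      refine Nat.sSup_mem ⟨0, ∅, ?_, rfl⟩ hbdd
      rintro ⟨a, d, h, -⟩
      simpa using h 0
    obtain ⟨B, hB, hc⟩ := hmem
    have hA : ∀ r y, y ∈ (fun r => Finset.univ.filter (fun y => e.symm (r, y) ∈ B)) r ↔
        e.symm (r, y) ∈ B := by simp
    refine ⟨fun r => Finset.univ.filter (fun y => e.symm (r, y) ∈ B), ?_, ?_⟩
    · rw [star5_key n e] at hB
      simpa only [hA, Finset.mem_coe, Finset.mem_filter, Finset.mem_univ, true_and] using hB
    · rw [← hc]
      exact star5_sum e.toEquiv B _ hA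
  · rintro S ⟨A, hA, rfl⟩
    let B : Finset (Fin n → ZMod 6) := Finset.univ.filter (fun g => (e g).2 ∈ A (e g).1)
    have hB : ∀ r y, y ∈ A r ↔ e.symm (r, y) ∈ B := by simp [B]
    refine le_csSup hbdd ⟨B, ?_, star5_sum e.toEquiv B A hB⟩
    rw [star5_key n e]
    simpa only [hB, Finset.mem_coe] using hA
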